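/- Let D be a digraph on vertex type V and let u, v, w ∈ V be distinct. Then contracting {v,w} commutes with the detour at u: the digraph (D↑u)/{v,w} equals the digraph (D/{v,w})↑u; both are digraphs on V \ {w} with identical arcs. -/

import Mathlib

/-- The detour of a digraph (irreflexive relation) `A` at a vertex `v`. -/
def detour {V : Type*} (A : V → V → Prop) (v : V) : V → V → Prop :=
  fun x y => x ≠ v ∧ y ≠ v ∧ x ≠ y ∧ (A x y ∨ (A x v ∧ A v y))

/-- The contraction `D/{v,w}` of a digraph `A` at two distinct vertices `v, w`:
the digraph on `V \ {w}` obtained by identifying `w` with `v`. -/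
def contractPair {V : Type*} [DecidableEq V] (A : V → V → Prop) (v w : V) :
    {x : V // x ≠ w} → {x : V // x ≠ w} → Prop :=
  fun x y =>
    if x.val = v then
      if y.val = v then False else A v y.val ∨ A w y.val
    else if y.val = v then A x.val v ∨ A x.val w
    else A x.val y.val

/-! Up to loops, which detours ignore and delete, contracting `{v, w}` takes the image of the arcs
under the map `V → V \ {w}` that sends `w` to `v` and fixes all other vertices. The fibre over `u`
is `{u}`, so the two arcs of a path `x → u → y` in the image lift to arcs that share the middle
vertex `u`, that is, to a path through `u`. -/

section Detour

variable {V : Type*} {A B : V → V → Prop} {u : V}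

instance detour_irrefl : Std.Irrefl (detour A u) :=
  ⟨fun _ h => h.2.2.1 rfl⟩

theorem detour_congr_of_ne (h : ∀ x y, x ≠ y → (A x y ↔ B x y)) : detour A u = detour B u := by
  funext x y
  refine propext <| and_congr_right fun hxu => and_congr_right fun hyu =>
    and_congr_right fun hxy => ?_
  rw [h x y hxy, h x u hxu, h u y hyu.symm]

end Detour

section ContractAlong

variable {V W : Type*}

/-- The contraction of a digraph along a map `f`: the vertices in each fibre of `f` are identified,
and the loops that arise are discarded. -/
def contractAlong (A : V → V → Prop) (f : V → W) : W → W → Prop :=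
  fun x y => x ≠ y ∧ Relation.Map A f f x y

theorem contractAlong_detour {A : V → V → Prop} {f : V → W} {u : V}
    (hu : ∀ a, f a = f u → a = u) :
    contractAlong (detour A u) f = detour (contractAlong A f) (f u) := by
  funext x y
  refine propext ⟨?_, ?_⟩
  · rintro ⟨hxy, a, b, ⟨hau, hbu, -, hab⟩, rfl, rfl⟩
    have hfa : f a ≠ f u := mt (hu a) hau
    have hfb : f b ≠ f u := mt (hu b) hbu
    refine ⟨hfa, hfb, hxy, hab.imp ?_ ?_⟩
    · exact fun h => ⟨hxy, a, b, h, rfl, rfl⟩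
    · exact fun h => ⟨⟨hfa, a, u, h.1, rfl, rfl⟩, ⟨hfb.symm, u, b, h.2, rfl, rfl⟩⟩
  · have lift {a b : V} (ha : f a ≠ f u) (hb : f b ≠ f u) (hab : f a ≠ f b)
        (h : A a b ∨ A a u ∧ A u b) : contractAlong (detour A u) f (f a) (f b) :=
      ⟨hab, a, b, ⟨ne_of_apply_ne f ha, ne_of_apply_ne f hb, ne_of_apply_ne f hab, h⟩, rfl, rfl⟩
    rintro ⟨hxu, hyu, hxy, ⟨-, a, b, hab, rfl, rfl⟩ |
      ⟨⟨-, a, c, hac, rfl, hc⟩, ⟨-, d, b, hdb, hd, rfl⟩⟩⟩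
    · exact lift hxu hyu hxy (.inl hab)
    · obtain rfl := hu c hc
      obtain rfl := hu d hd
      exact lift hxu hyu hxy (.inr ⟨hac, hdb⟩)

end ContractAlong

section MergeInto

variable {V : Type*} [DecidableEq V] {A : V → V → Prop} {v w : V}

/-- The quotient map `V → V \ {w}` of the contraction of `{v, w}`: it sends `w` to `v` and fixes
every other vertex. -/
def mergeInto (hvw : v ≠ w) (a : V) : {x : V // x ≠ w} :=
  if h : a = w then ⟨v, hvw⟩ else ⟨a, h⟩

theorem mergeInto_of_ne (hvw : v ≠ w) {a : V} (ha : a ≠ w) : mergeInto hvw a = ⟨a, ha⟩ :=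
  dif_neg ha

theorem mergeInto_eq_iff (hvw : v ≠ w) {a : V} {x : {x : V // x ≠ w}} :
    mergeInto hvw a = x ↔ a = x.val ∨ a = w ∧ x.val = v := by
  grind [mergeInto]

theorem contractPair_iff_contractAlong (hvw : v ≠ w) {x y : {x : V // x ≠ w}} (hxy : x ≠ y) :
    contractPair A v w x y ↔ contractAlong A (mergeInto hvw) x y := by
  have hval : x.val ≠ y.val := Subtype.coe_ne_coe.mpr hxy
  simp only [contractPair, contractAlong, Relation.Map, mergeInto_eq_iff]
  by_cases hx : x.val = v <;> by_cases hy : y.val = v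
  · exact absurd (hx.trans hy.symm) hval
  · simp [hxy, hx, hy, and_or_left, exists_or]
  · simp [hxy, hx, hy, and_or_left, exists_or]
  · simp [hxy, hx, hy]

theorem contractPair_eq_contractAlong [Std.Irrefl A] (hvw : v ≠ w) :
    contractPair A v w = contractAlong A (mergeInto hvw) := by
  funext x y
  obtain rfl | hxy := eq_or_ne x y
  · have no_loop : ¬ contractPair A v w x x := by
      by_cases hx : x.val = v <;> simp [contractPair, hx, Std.Irrefl.irrefl]
    simp [contractAlong, no_loop]
  · exact propext (contractPair_iff_contractAlong hvw hxy)

end MergeInto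

theorem contract_detour_comm_general {V : Type*} [DecidableEq V] (A : V → V → Prop)
    {u v w : V} (huv : u ≠ v) (hvw : v ≠ w) (huw : u ≠ w) :
    contractPair (detour A u) v w = detour (contractPair A v w) ⟨u, huw⟩ := by
  have hu : mergeInto hvw u = ⟨u, huw⟩ := mergeInto_of_ne hvw huw
  have fibre_u (a : V) (ha : mergeInto hvw a = mergeInto hvw u) : a = u := by
    rw [hu, mergeInto_eq_iff] at ha
    exact ha.resolve_right fun h => huv h.2
  calc contractPair (detour A u) v w
      = contractAlong (detour A u) (mergeInto hvw) := contractPair_eq_contractAlong hvw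
    _ = detour (contractAlong A (mergeInto hvw)) (mergeInto hvw u) := contractAlong_detour fibre_u
    _ = detour (contractPair A v w) ⟨u, huw⟩ := by
      rw [hu]
      exact detour_congr_of_ne fun _ _ hxy => (contractPair_iff_contractAlong hvw hxy).symm

/-- Contracting `{v,w}` commutes with the detour at `u`:
`(D↑u)/{v,w} = (D/{v,w})↑u` as digraphs on `V \ {w}`. -/
theorem contract_detour_comm {V : Type*} [DecidableEq V]
    (A : V → V → Prop) (hA : Irreflexive A)
    (u v w : V) (huv : u ≠ v) (hvw : v ≠ w) (huw : u ≠ w) :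
    contractPair (detour A u) v w = detour (contractPair A v w) ⟨u, huw⟩ :=
  contract_detour_comm_general A huv hvw huw
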